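/- Let R(x,y) = (α_x(y), β_y(x)) be a non-degenerate YBE solution on a set X. Then there exists a group homomorphism Θ : G_R → Aut(A_R) such that Θ(ι_G x)(ι_A y) = ι_A(α_x(y)) for all x, y ∈ X; in particular each α_x extends to an automorphism of the derived structure group A_R preserving the image of X. -/

import Mathlib

/-- The map acting as `R` on the first two coordinates of `X × X × X` (i.e. `R × id_X`). -/
def Rfst {X : Type*} (R : X × X → X × X) : X × X × X → X × X × X :=
  fun p => ((R (p.1, p.2.1)).1, (R (p.1, p.2.1)).2, p.2.2)

/-- The map acting as `R` on the last two coordinates of `X × X × X` (i.e. `id_X × R`). -/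
def Rsnd {X : Type*} (R : X × X → X × X) : X × X × X → X × X × X :=
  fun p => (p.1, R p.2)

/-- The braid relation `(R × id) ∘ (id × R) ∘ (R × id) = (id × R) ∘ (R × id) ∘ (id × R)`. -/
def IsBraided {X : Type*} (R : X × X → X × X) : Prop :=
  Rfst R ∘ Rsnd R ∘ Rfst R = Rsnd R ∘ Rfst R ∘ Rsnd R

/-- The map `R(x, y) = (α_x(y), β_y(x))`. -/
def YBEform {X : Type*} (α β : X → X → X) : X × X → X × X :=
  fun p => (α p.1 p.2, β p.2 p.1)


/-- The defining relators of the structure group of `R(x,y) = (α_x(y), β_y(x))`: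
`x * y = α_x(y) * β_y(x)`. -/
def ybRels {X : Type*} (α β : X → X → X) : Set (FreeGroup X) :=
  {r | ∃ x y : X, r = FreeGroup.of x * FreeGroup.of y *
        (FreeGroup.of (α x y) * FreeGroup.of (β y x))⁻¹}

/-- The structure group `G_R` of the solution `R(x,y) = (α_x(y), β_y(x))`. -/
abbrev StructureGroup {X : Type*} (α β : X → X → X) : Type _ :=
  PresentedGroup (ybRels α β)

/-- The defining relators of the derived structure group of `R`:
`x * y = y * φ_R(x,y)` with `φ_R(x,y) = α_y(β_{α_x⁻¹(y)}(x))`. -/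
def derivedRels {X : Type*} (α β αinv : X → X → X) : Set (FreeGroup X) :=
  {r | ∃ x y : X, r = FreeGroup.of x * FreeGroup.of y *
        (FreeGroup.of y * FreeGroup.of (α y (β (αinv x y) x)))⁻¹}

/-- The derived structure group `A_R` of the solution `R`. -/
abbrev DerivedGroup {X : Type*} (α β αinv : X → X → X) : Type _ :=
  PresentedGroup (derivedRels α β αinv)

theorem yb_aux {X : Type*} (α β αinv : X → X → X)
    (hYB : IsBraided (YBEform α β))
    (hinv : ∀ x, Function.LeftInverse (αinv x) (α x) ∧
      Function.RightInverse (αinv x) (α x)) :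
    (∀ x y z, α (α x y) (α (β y x) z) = α x (α y z)) ∧
    (∀ z x y, α z (α y (β (αinv x y) x)) =
      α (α z y) (β (αinv (α z x) (α z y)) (α z x))) := by
  have h1 : ∀ x y z, α (α x y) (α (β y x) z) = α x (α y z) := by
    intro x y z
    have h := congrArg Prod.fst (congrFun hYB (x, y, z))
    simpa [Rfst, Rsnd, YBEform] using h
  have h2 : ∀ x y z, β (α (β y x) z) (α x y) = α (β (α y z) x) (β z y) := by
    intro x y z
    have h := congrArg (fun p => p.2.1) (congrFun hYB (x, y, z))
    simpa [Rfst, Rsnd, YBEform] using h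
  refine ⟨h1, ?_⟩
  intro z x y
  obtain ⟨t, rfl⟩ : ∃ t, y = α x t := ⟨αinv x y, ((hinv x).2 y).symm⟩
  have e : αinv (α z x) (α z (α x t)) = α (β x z) t := by
    rw [← h1, (hinv _).1]
  rw [e, (hinv _).1, h2, h1]

/-- Endomorphism of the derived group induced by a map compatible with the relations. -/
def derivedMap {X : Type*} (α β αinv : X → X → X) (f : X → X)
    (hf : ∀ x y, f (α y (β (αinv x y) x)) = α (f y) (β (αinv (f x) (f y)) (f x))) :
    DerivedGroup α β αinv →* DerivedGroup α β αinv :=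
  PresentedGroup.toGroup (f := fun x => PresentedGroup.of (f x)) (by
    rintro r ⟨x, y, rfl⟩
    simp only [map_mul, map_inv, FreeGroup.lift_apply_of, hf]
    exact PresentedGroup.one_of_mem (rels := derivedRels α β αinv) ⟨f x, f y, rfl⟩)

theorem derivedMap_of {X : Type*} (α β αinv : X → X → X) (f : X → X)
    (hf : ∀ x y, f (α y (β (αinv x y) x)) = α (f y) (β (αinv (f x) (f y)) (f x))) (x : X) :
    derivedMap α β αinv f hf (PresentedGroup.of x) = PresentedGroup.of (f x) :=
  PresentedGroup.toGroup.of _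

theorem stmt7 {X : Type*} (α β αinv : X → X → X)
    (hbij : Function.Bijective (YBEform α β))
    (hYB : IsBraided (YBEform α β))
    (hα : ∀ x, Function.Bijective (α x)) (hβ : ∀ x, Function.Bijective (β x))
    (hinv : ∀ x, Function.LeftInverse (αinv x) (α x) ∧
      Function.RightInverse (αinv x) (α x)) :
    ∃ Θ : StructureGroup α β →* MulAut (DerivedGroup α β αinv),
      ∀ x y : X, Θ (PresentedGroup.of x) (PresentedGroup.of y) =
        PresentedGroup.of (α x y) := by
  obtain ⟨h1, h3⟩ := yb_aux α β αinv hYB hinv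
  have h4 : ∀ z x y, αinv z (α y (β (αinv x y) x)) =
      α (αinv z y) (β (αinv (αinv z x) (αinv z y)) (αinv z x)) := by
    intro z x y
    apply (hα z).1
    rw [h3, (hinv z).2, (hinv z).2, (hinv z).2]
  let A : X → MulAut (DerivedGroup α β αinv) := fun z =>
    MonoidHom.toMulEquiv (derivedMap α β αinv (α z) (h3 z))
      (derivedMap α β αinv (αinv z) (h4 z))
      (by
        apply PresentedGroup.ext
        intro x
        simp only [MonoidHom.comp_apply, derivedMap_of, MonoidHom.id_apply]
        rw [(hinv z).1])
      (by
        apply PresentedGroup.ext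
        intro x
        simp only [MonoidHom.comp_apply, derivedMap_of, MonoidHom.id_apply]
        rw [(hinv z).2])
  have hA : ∀ z x, A z (PresentedGroup.of x) = PresentedGroup.of (α z x) :=
    fun z x => derivedMap_of α β αinv (α z) (h3 z) x
  have hrel : ∀ r ∈ ybRels α β, FreeGroup.lift A r = 1 := by
    rintro r ⟨x, y, rfl⟩
    simp only [map_mul, map_inv, FreeGroup.lift_apply_of]
    rw [mul_inv_eq_one]
    apply MulEquiv.toMonoidHom_injective
    apply PresentedGroup.ext
    intro z
    change A x (A y (PresentedGroup.of z)) = A (α x y) (A (β y x) (PresentedGroup.of z))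
    rw [hA, hA, hA, hA, h1]
  refine ⟨PresentedGroup.toGroup hrel, fun x y => ?_⟩
  rw [PresentedGroup.toGroup.of]
  exact hA x y
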